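/- Let G be a finite connected simple graph that admits a star spanning tree T_s with center v. Then the tree intersection number of T_s satisfies ∩(T_s) = (1/2) Σ_{u ∈ V \ {v}} (d(u) - 1)(d(u) - 2), where d(u) is the degree of u in G. -/

import Mathlib

open SimpleGraph

/-- The set of edges lying on some path (in a tree: the unique path) between `x` and `y`
in the graph `T`. -/
def pathEdges {V : Type*} (T : SimpleGraph V) (x y : V) : Set (Sym2 V) :=
  {f | ∃ p : T.Walk x y, p.IsPath ∧ f ∈ p.edges}

/-- The edge set of the tree-cycle induced (in the spanning tree `T`) by the cycle-edge `e`: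
the edge `e` itself together with the edges of the (unique) path in `T` between
the endpoints of `e`. -/
def cycEdges {V : Type*} (T : SimpleGraph V) (e : Sym2 V) : Set (Sym2 V) :=
  insert e {f | ∃ x y, e = s(x, y) ∧ f ∈ pathEdges T x y}

/-- The vertex set of the tree-cycle induced (in the spanning tree `T`) by the
cycle-edge `e`. -/
def cycVerts {V : Type*} (T : SimpleGraph V) (e : Sym2 V) : Set V :=
  {v | ∃ x y, e = s(x, y) ∧ ∃ p : T.Walk x y, p.IsPath ∧ v ∈ p.support}

/-- Two tree-cycles (induced by the cycle-edges `e` and `f`) have non-empty intersection: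
some edge of `T` belongs to both of them. -/
def cyclesIntersect {V : Type*} (T : SimpleGraph V) (e f : Sym2 V) : Prop :=
  (cycEdges T e ∩ cycEdges T f ∩ T.edgeSet).Nonempty

/-- The cycle intersection number `∩_T(c)` of the tree-cycle `c` induced by the
cycle-edge `e`: the number of tree-cycles distinct from `c` whose intersection with `c`
is non-empty. -/
noncomputable def cycleInterNum {V : Type*} (G T : SimpleGraph V) (e : Sym2 V) : ℕ :=
  {f | f ∈ G.edgeSet \ T.edgeSet ∧ f ≠ e ∧ cyclesIntersect T e f}.ncard

/-- The tree intersection number `∩_G(T)`: the number of unordered pairs of distinct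
tree-cycles of `T` whose intersection is non-empty. -/
noncomputable def treeInterNum {V : Type*} (G T : SimpleGraph V) : ℕ :=
  {p : Sym2 (Sym2 V) | ∃ e f : Sym2 V, p = s(e, f) ∧ e ≠ f ∧
    e ∈ G.edgeSet \ T.edgeSet ∧ f ∈ G.edgeSet \ T.edgeSet ∧ cyclesIntersect T e f}.ncard

/-- `T` is a star spanning tree of `G` with center `v`. -/
def IsStarSpanningTree {V : Type*} (G T : SimpleGraph V) (v : V) : Prop :=
  T ≤ G ∧ T.IsTree ∧ ∀ u, u ≠ v → T.Adj v u

/-- `closest-point-set(w, c)`: the set of vertices outside the tree-cycle `c` (induced by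
the cycle-edge `e`) whose closest point on `c` (with respect to distance in `T`) is `w`. -/
def closestPointSet {V : Type*} (T : SimpleGraph V) (e : Sym2 V) (w : V) : Set V :=
  {v | v ∉ cycVerts T e ∧ ∀ u ∈ cycVerts T e, T.dist v w ≤ T.dist v u}

/-!
Tree-cycles of a spanning star with center `v` have the form `v x y`, so two of them share a tree
edge exactly when their cycle-edges share a vertex. The intersecting pairs are therefore the edges
of the line graph of `G \ starGraph v`. The line graph of `H` has `∑ u, (H.degree u).choose 2`
edges, since two distinct edges meet in at most one vertex. Removing the star lowers each degree
outside `v` by one and isolates `v`.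
-/

section LineGraph

variable {V : Type*} [Fintype V] (G : SimpleGraph V) [DecidableRel G.Adj]

section EdgePairs

variable [DecidableEq V]

theorem card_filter_edgeSet_mem_eq_degree (u : V) :
    (Finset.univ.filter fun e : G.edgeSet => u ∈ (e : Sym2 V)).card = G.degree u := by
  rw [← card_incidenceFinset_eq_degree, ← Finset.card_map (Function.Embedding.subtype _)]
  congr 1
  ext e
  simp [mem_incidenceFinset, incidenceSet, and_comm]

/-- The pairs of distinct edges of `G` that meet at `u`, as a set of edges of the line graph. -/
def edgePairsAt (u : V) : Finset (Sym2 G.edgeSet) :=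
  (Finset.univ.filter fun e : G.edgeSet => u ∈ (e : Sym2 V)).offDiag.image Sym2.mk.uncurry

variable {G} in
theorem mk_mem_edgePairsAt {u : V} {e f : G.edgeSet} :
    s(e, f) ∈ edgePairsAt G u ↔ e ≠ f ∧ u ∈ (e : Sym2 V) ∧ u ∈ (f : Sym2 V) := by
  simp only [edgePairsAt, Finset.mem_image, Finset.mem_offDiag, Finset.mem_filter,
    Finset.mem_univ, true_and, Prod.exists, Function.uncurry_apply_pair, Sym2.eq_iff]
  grind

theorem card_edgePairsAt (u : V) : (edgePairsAt G u).card = (G.degree u).choose 2 := by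
  rw [edgePairsAt, Sym2.card_image_offDiag, card_filter_edgeSet_mem_eq_degree]

theorem disjoint_edgePairsAt {u w : V} (huw : u ≠ w) :
    Disjoint (edgePairsAt G u) (edgePairsAt G w) := by
  refine Finset.disjoint_left.2 fun p => Sym2.ind (fun e f hu hw => ?_) p
  rw [mk_mem_edgePairsAt] at hu hw
  have he := (Sym2.mem_and_mem_iff huw).1 ⟨hu.2.1, hw.2.1⟩
  have hf := (Sym2.mem_and_mem_iff huw).1 ⟨hu.2.2, hw.2.2⟩
  exact hu.1 (Subtype.ext (he.trans hf.symm))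

theorem edgeSet_lineGraph_eq_biUnion :
    G.lineGraph.edgeSet = (Finset.univ.biUnion (edgePairsAt G) : Set (Sym2 G.edgeSet)) := by
  ext p
  induction p with
  | h e f => simp [mk_mem_edgePairsAt, lineGraph_adj_iff_exists]

end EdgePairs

theorem ncard_edgeSet_lineGraph :
    G.lineGraph.edgeSet.ncard = ∑ u, (G.degree u).choose 2 := by
  classical
  rw [edgeSet_lineGraph_eq_biUnion, Set.ncard_coe_finset, Finset.card_biUnion]
  · simp only [card_edgePairsAt]
  · exact fun u _ w _ huw => disjoint_edgePairsAt G huw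

end LineGraph

section TreeCycles

variable {V : Type*} {T : SimpleGraph V} {x y : V}

theorem pathEdges_comm : pathEdges T x y = pathEdges T y x := by
  have reverse_subset (x y : V) : pathEdges T x y ⊆ pathEdges T y x := by
    rintro f ⟨p, hp, hf⟩
    exact ⟨p.reverse, hp.reverse, by simpa using hf⟩
  exact (reverse_subset x y).antisymm (reverse_subset y x)

theorem pathEdges_subset_edgeSet : pathEdges T x y ⊆ T.edgeSet := by
  rintro f ⟨p, -, hf⟩
  exact p.edges_subset_edgeSet hf

theorem pathEdges_eq_of_isPath (hT : T.IsAcyclic) {p : T.Walk x y} (hp : p.IsPath) :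
    pathEdges T x y = {f | f ∈ p.edges} := by
  ext f
  refine ⟨?_, fun hf => ⟨p, hp, hf⟩⟩
  rintro ⟨q, hq, hf⟩
  have hqp : q = p := congrArg Subtype.val ((hT.subsingleton_path x y).elim ⟨q, hq⟩ ⟨p, hp⟩)
  rwa [hqp] at hf

theorem cycEdges_inter_edgeSet (hxy : ¬ T.Adj x y) :
    cycEdges T s(x, y) ∩ T.edgeSet = pathEdges T x y := by
  have endpoints : {f | ∃ a b, s(x, y) = s(a, b) ∧ f ∈ pathEdges T a b} = pathEdges T x y := by
    ext f
    refine ⟨?_, fun hf => ⟨x, y, rfl, hf⟩⟩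
    rintro ⟨a, b, hab, hf⟩
    obtain ⟨rfl, rfl⟩ | ⟨rfl, rfl⟩ := Sym2.eq_iff.1 hab
    · exact hf
    · rwa [pathEdges_comm]
  rw [cycEdges, endpoints, Set.insert_inter_of_notMem (mt T.mem_edgeSet.1 hxy),
    Set.inter_eq_left.2 pathEdges_subset_edgeSet]

/-- The graph on the cycle-edges of `T` in `G` in which two cycle-edges are adjacent when their
tree-cycles are distinct and share a tree edge. -/
def treeCycleInterGraph (G T : SimpleGraph V) : SimpleGraph (G \ T).edgeSet where
  Adj e f := e ≠ f ∧ cyclesIntersect T e f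
  symm.symm e f h := ⟨h.1.symm, by simpa only [cyclesIntersect, Set.inter_comm] using h.2⟩

theorem treeInterNum_eq_ncard_edgeSet (G T : SimpleGraph V) :
    treeInterNum G T = (treeCycleInterGraph G T).edgeSet.ncard := by
  rw [treeInterNum, ← Set.ncard_image_of_injective _ (Sym2.map.injective Subtype.val_injective)]
  congr 1
  ext p
  constructor
  · rintro ⟨e, f, rfl, hne, he, hf, hef⟩
    rw [← edgeSet_sdiff] at he hf
    exact ⟨s(⟨e, he⟩, ⟨f, hf⟩), ⟨fun h => hne (congrArg Subtype.val h), hef⟩, rfl⟩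
  · rintro ⟨q, hq, rfl⟩
    induction q with
    | h e f =>
      exact ⟨e, f, rfl, Subtype.val_injective.ne hq.1, edgeSet_sdiff G T ▸ e.2,
        edgeSet_sdiff G T ▸ f.2, hq.2⟩

end TreeCycles

section Star

variable {V : Type*} {G : SimpleGraph V} {v : V}

theorem IsStarSpanningTree.eq_starGraph {T : SimpleGraph V} (h : IsStarSpanningTree G T v) :
    T = starGraph v := by
  obtain ⟨-, hT, hadj⟩ := h
  have starGraph_le : starGraph v ≤ T := by
    intro a b hab
    obtain ⟨hne, rfl | rfl⟩ := starGraph_adj.1 hab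
    · exact hadj b hne.symm
    · exact (hadj a hne).symm
  exact ((isTree_iff_minimal_connected.1 hT).eq_of_le (connected_starGraph v) starGraph_le).symm

theorem pathEdges_starGraph {x y : V} (hx : x ≠ v) (hy : y ≠ v) (hxy : x ≠ y) :
    pathEdges (starGraph v) x y = {s(v, x), s(v, y)} := by
  let p : (starGraph v).Walk x y :=
    .cons (starGraph_center_adj' hx.symm) (.cons (starGraph_center_adj hy.symm) .nil)
  have hp : p.IsPath := by simp [p, Walk.cons_isPath_iff, hx, hxy, hy.symm]
  rw [pathEdges_eq_of_isPath (isAcyclic_starGraph v) hp]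
  ext f
  simp [p, Sym2.eq_swap (a := x)]

theorem cycEdges_starGraph_inter_edgeSet {e : Sym2 V} (he : e ∈ (starGraph v)ᶜ.edgeSet) :
    cycEdges (starGraph v) e ∩ (starGraph v).edgeSet = (s(v, ·)) '' (e : Set V) := by
  induction e with
  | h x y =>
    obtain ⟨hxy, hnadj⟩ := (compl_adj _ _ _).1 he
    obtain ⟨hx, hy⟩ : x ≠ v ∧ y ≠ v := by simpa [hxy] using hnadj
    rw [cycEdges_inter_edgeSet hnadj, pathEdges_starGraph hx hy hxy, Sym2.coe_mk, Set.image_pair]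

theorem cyclesIntersect_starGraph_iff {e f : Sym2 V} (he : e ∈ (starGraph v)ᶜ.edgeSet)
    (hf : f ∈ (starGraph v)ᶜ.edgeSet) :
    cyclesIntersect (starGraph v) e f ↔ (e ∩ f : Set V).Nonempty := by
  have spoke_injective : Function.Injective (s(v, ·)) := fun _ _ => Sym2.congr_right.1
  rw [cyclesIntersect, Set.inter_inter_distrib_right, cycEdges_starGraph_inter_edgeSet he,
    cycEdges_starGraph_inter_edgeSet hf, ← Set.image_inter spoke_injective, Set.image_nonempty]

variable (G v) in
theorem treeCycleInterGraph_starGraph :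
    treeCycleInterGraph G (starGraph v) = (G \ starGraph v).lineGraph := by
  have sdiff_subset_compl : (G \ starGraph v).edgeSet ⊆ (starGraph v)ᶜ.edgeSet :=
    edgeSet_mono (sdiff_eq.trans_le inf_le_right)
  ext e f
  exact and_congr_right fun _ =>
    cyclesIntersect_starGraph_iff (sdiff_subset_compl e.2) (sdiff_subset_compl f.2)

variable [Fintype V] [DecidableRel G.Adj]

theorem degree_sdiff_add_degree_of_le {H : SimpleGraph V} [DecidableRel H.Adj] (h : H ≤ G)
    (u : V) : (G \ H).degree u + H.degree u = G.degree u := by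
  classical
  simp only [← card_neighborFinset_eq_degree, neighborFinset_sdiff]
  refine Finset.card_sdiff_add_card_eq_card fun w hw => ?_
  rw [mem_neighborFinset] at hw ⊢
  exact h hw

variable [DecidableEq V]

variable (G v) in
theorem degree_sdiff_starGraph_center : (G \ starGraph v).degree v = 0 := by
  simpa [← card_neighborFinset_eq_degree, Finset.ext_iff] using fun _ => Adj.ne

theorem degree_sdiff_starGraph_add_one (h : starGraph v ≤ G) {u : V} (hu : u ≠ v) :
    (G \ starGraph v).degree u + 1 = G.degree u := by
  rw [← degree_sdiff_add_degree_of_le h u, degree_starGraph_of_ne_center hu]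

theorem treeInterNum_starGraph (h : starGraph v ≤ G) :
    treeInterNum G (starGraph v) = ∑ u ∈ Finset.univ.erase v, (G.degree u - 1).choose 2 := by
  rw [treeInterNum_eq_ncard_edgeSet, treeCycleInterGraph_starGraph, ncard_edgeSet_lineGraph,
    ← Finset.add_sum_erase _ _ (Finset.mem_univ v), degree_sdiff_starGraph_center,
    Nat.choose_zero_succ, zero_add]
  refine Finset.sum_congr rfl fun u hu => ?_
  rw [← degree_sdiff_starGraph_add_one h (Finset.ne_of_mem_erase hu), Nat.add_sub_cancel]

end Star

/-- If a connected graph `G` admits a star spanning tree `T_s` with center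
`v`, then `∩(T_s) = (1/2) Σ_{u ≠ v} (d(u) - 1)(d(u) - 2)`. -/
theorem stmt_11 {V : Type*} [Fintype V] [DecidableEq V]
    (G Ts : SimpleGraph V) [DecidableRel G.Adj]
    (hG : G.Connected) (v : V) (hTs : IsStarSpanningTree G Ts v) :
    (treeInterNum G Ts : ℚ)
      = (1 / 2) * ∑ u ∈ Finset.univ.erase v,
          ((G.degree u : ℚ) - 1) * ((G.degree u : ℚ) - 2) := by
  obtain rfl := hTs.eq_starGraph
  have star_le : starGraph v ≤ G := hTs.1
  rw [treeInterNum_starGraph star_le, Nat.cast_sum, Finset.mul_sum]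
  refine Finset.sum_congr rfl fun u hu => ?_
  have one_le_degree : 1 ≤ G.degree u :=
    le_of_add_le_right (degree_sdiff_starGraph_add_one star_le (Finset.ne_of_mem_erase hu)).le
  rw [Nat.cast_choose_two, Nat.cast_sub one_le_degree]
  ring
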